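/- (Uniqueness of extension.) Let (X, 𝒳) be a stable measurable space and ℰ a stable collection generating 𝒳 (i.e. Σ(ℰ) = 𝒳) which is closed under finite conditional intersections. Let μ, ν be two stable measures on (X, 𝒳) such that μ(V|A) = ν(V|A) for all V|A ∈ ℰ, and suppose there exists a sequence (Z_k|C_k) in ℰ with ⊔_k Z_k|C_k = X and μ(Z_k|C_k) = ν(Z_k|C_k) < ∞ a.s. for all k. Then μ = ν. -/

import Mathlib

/-!
Common framework for conditional set theory and conditional measure theory
in the sense of Drapeau–Jamneshan–Karliczek–Kupper, specialized to the
measure algebra associated to a probability space `(Ω, F, P)`.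

Functions on `Ω` are identified when they agree `P`-a.s., and measurable sets
are identified when their symmetric difference is a null set.  Conditional
subsets of a stable set `X` are represented by raw pairs `(V, A)` consisting of
a set of functions and a (measurable) base set; all notions are formulated with
respect to the almost-sure identifications via the relations `cle` and `ceq`.
-/

open MeasureTheory Filter Set Topology
open scoped ENNReal

noncomputable section

namespace CondMT

variable {Ω E F' : Type*}

/-- A countable partition of `Ω` into measurable sets (modulo `P`-null sets). -/
structure Partition {Ω : Type*} (mΩ : MeasurableSpace Ω) (P : @Measure Ω mΩ) where
  part : ℕ → Set Ω
  meas : ∀ k, MeasurableSet[mΩ] (part k)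
  disj : ∀ i j, i ≠ j → P (part i ∩ part j) = 0
  cover : P ((⋃ k, part k)ᶜ) = 0

variable {mΩ : MeasurableSpace Ω}

open Classical in
/-- The concatenation `∑ x_k|A_k` of a sequence of functions along a partition:
the (a.s. unique) function equal to `x_k` on `A_k` for every `k`. -/
def Partition.concat {P : @Measure Ω mΩ} (A : Partition mΩ P) (x : ℕ → Ω → E) : Ω → E :=
  fun ω => if h : ∃ k, ω ∈ A.part k then x (Nat.find h) ω else x 0 ω

/-- A stable set of functions on `Ω`: nonempty, closed under a.s. modification and
closed under countable concatenations along partitions. -/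
def Stable (P : @Measure Ω mΩ) (X : Set (Ω → E)) : Prop :=
  X.Nonempty ∧ (∀ x ∈ X, ∀ y, x =ᵐ[P] y → y ∈ X) ∧
    ∀ (A : Partition mΩ P) (x : ℕ → Ω → E), (∀ k, x k ∈ X) → A.concat x ∈ X

/-- Raw data of a conditional subset `V|A`: the carrier `V` and the base set `A`. -/
abbrev CondRaw (Ω E : Type*) := Set (Ω → E) × Set Ω

/-- `S` represents a conditional subset of the stable set `X`: the carrier is a
stable subset of `X` and the base is measurable. -/
def IsCond (P : @Measure Ω mΩ) (X : Set (Ω → E)) (S : CondRaw Ω E) : Prop :=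
  Stable P S.1 ∧ S.1 ⊆ X ∧ MeasurableSet[mΩ] S.2

/-- Conditional inclusion `V|A ⊑ W|B`: `A ⊆ B` a.s., and every `x|A`, `x ∈ V`,
coincides a.s. on `A` with some `y|A`, `y ∈ W`. -/
def cle (P : @Measure Ω mΩ) (S T : CondRaw Ω E) : Prop :=
  P (S.2 \ T.2) = 0 ∧ ∀ x ∈ S.1, ∃ y ∈ T.1, ∀ᵐ ω ∂P, ω ∈ S.2 → x ω = y ω

/-- Identification of conditional subsets (equality in the conditional power set). -/
def ceq (P : @Measure Ω mΩ) (S T : CondRaw Ω E) : Prop := cle P S T ∧ cle P T S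

/-- `x|C ∈ V|C`: the restriction of `x` to `C` agrees a.s. on `C` with an element of `V`. -/
def memOn (P : @Measure Ω mΩ) (C : Set Ω) (x : Ω → E) (V : Set (Ω → E)) : Prop :=
  ∃ y ∈ V, ∀ᵐ ω ∂P, ω ∈ C → x ω = y ω

/-- `∑ V_k|A_k`, the set of concatenations of sequences taken from the `V_k`. -/
def concatSet (P : @Measure Ω mΩ) (A : Partition mΩ P) (V : ℕ → Set (Ω → E)) :
    Set (Ω → E) :=
  {f | ∃ x : ℕ → Ω → E, (∀ k, x k ∈ V k) ∧ f =ᵐ[P] A.concat x}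

/-- Countable concatenation `∑ (V_k|B_k)|A_k := (∑ V_k|A_k)|⋃ (A_k ∩ B_k)` in the
conditional power set. -/
def condConcat (P : @Measure Ω mΩ) (A : Partition mΩ P) (S : ℕ → CondRaw Ω E) :
    CondRaw Ω E :=
  (concatSet P A fun k => (S k).1, ⋃ k, A.part k ∩ (S k).2)

/-- Restriction `(V|A)|B := V|(A ∩ B)`. -/
def crestrict (S : CondRaw Ω E) (B : Set Ω) : CondRaw Ω E := (S.1, S.2 ∩ B)

/-- The degenerate conditional subset `X|∅ = {∗}`, the least element of `P(X)`. -/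
def cbot (X : Set (Ω → E)) : CondRaw Ω E := (X, (∅ : Set Ω))

/-- The greatest element `X = X|Ω` of `P(X)`. -/
def ctop (X : Set (Ω → E)) : CondRaw Ω E := (X, (univ : Set Ω))

/-- `a` is a supremum (conditional union) of the family `s` in `(P(X), ⊑)`. -/
def IsSupOf (P : @Measure Ω mΩ) (X : Set (Ω → E)) (s : Set (CondRaw Ω E))
    (a : CondRaw Ω E) : Prop :=
  IsCond P X a ∧ (∀ b ∈ s, cle P b a) ∧
    ∀ c, IsCond P X c → (∀ b ∈ s, cle P b c) → cle P a c

/-- `a` is an infimum (conditional intersection) of the family `s` in `(P(X), ⊑)`. -/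
def IsInfOf (P : @Measure Ω mΩ) (X : Set (Ω → E)) (s : Set (CondRaw Ω E))
    (a : CondRaw Ω E) : Prop :=
  IsCond P X a ∧ (∀ b ∈ s, cle P a b) ∧
    ∀ c, IsCond P X c → (∀ b ∈ s, cle P c b) → cle P c a

open Classical in
/-- The conditional union (supremum) of a family of conditional subsets. -/
def cSup (P : @Measure Ω mΩ) (X : Set (Ω → E)) (s : Set (CondRaw Ω E)) : CondRaw Ω E :=
  if h : ∃ a, IsSupOf P X s a then h.choose else ctop X

open Classical in
/-- The conditional intersection (infimum) of a family of conditional subsets. -/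
def cInf (P : @Measure Ω mΩ) (X : Set (Ω → E)) (s : Set (CondRaw Ω E)) : CondRaw Ω E :=
  if h : ∃ a, IsInfOf P X s a then h.choose else ctop X

/-- Binary conditional union. -/
def cSup₂ (P : @Measure Ω mΩ) (X : Set (Ω → E)) (a b : CondRaw Ω E) : CondRaw Ω E :=
  cSup P X {a, b}

/-- Binary conditional intersection. -/
def cInf₂ (P : @Measure Ω mΩ) (X : Set (Ω → E)) (a b : CondRaw Ω E) : CondRaw Ω E :=
  cInf P X {a, b}

/-- Conditional union of an indexed family. -/
def cSupFam (P : @Measure Ω mΩ) (X : Set (Ω → E)) {ι : Sort*}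
    (S : ι → CondRaw Ω E) : CondRaw Ω E :=
  cSup P X (range S)

/-- Conditional intersection of an indexed family. -/
def cInfFam (P : @Measure Ω mΩ) (X : Set (Ω → E)) {ι : Sort*}
    (S : ι → CondRaw Ω E) : CondRaw Ω E :=
  cInf P X (range S)

/-- Disjointness of conditional subsets: `V|A ⊓ W|B = {∗}`. -/
def cdisjoint (P : @Measure Ω mΩ) (X : Set (Ω → E)) (a b : CondRaw Ω E) : Prop :=
  ceq P (cInf₂ P X a b) (cbot X)

/-- The conditional complement `(V|A)^⊏ := ⊔ {W|B : W|B ⊓ V|A = {∗}}`. -/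
def ccompl (P : @Measure Ω mΩ) (X : Set (Ω → E)) (a : CondRaw Ω E) : CondRaw Ω E :=
  cSup P X {b | IsCond P X b ∧ cdisjoint P X b a}

open Classical in
/-- The largest measurable set (mod null sets) satisfying a property `Φ`,
obtained by an exhaustion argument; junk value `∅` if there is none. -/
def largestSet (P : @Measure Ω mΩ) (Φ : Set Ω → Prop) : Set Ω :=
  if h : ∃ C, MeasurableSet[mΩ] C ∧ Φ C ∧
      ∀ C', MeasurableSet[mΩ] C' → Φ C' → P (C' \ C) = 0
  then h.choose else ∅

open Classical in
/-- The smallest measurable set (mod null sets) satisfying a property `Φ`. -/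
def smallestSet (P : @Measure Ω mΩ) (Φ : Set Ω → Prop) : Set Ω :=
  if h : ∃ C, MeasurableSet[mΩ] C ∧ Φ C ∧
      ∀ C', MeasurableSet[mΩ] C' → Φ C' → P (C \ C') = 0
  then h.choose else univ

/-- Essential infimum `inf_i A_i` of a family of measurable sets in the measure algebra. -/
def essInfFam (P : @Measure Ω mΩ) {ι : Sort*} (A : ι → Set Ω) : Set Ω :=
  largestSet P fun C => ∀ i, P (C \ A i) = 0

/-- Essential supremum `sup_i A_i` of a family of measurable sets in the measure algebra. -/
def essSupFam (P : @Measure Ω mΩ) {ι : Sort*} (A : ι → Set Ω) : Set Ω :=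
  smallestSet P fun C => ∀ i, P (A i \ C) = 0

/-- A stable collection: a nonempty, `ceq`-saturated family of conditional subsets of `X`
closed under countable concatenations. -/
def IsStableColl (P : @Measure Ω mΩ) (X : Set (Ω → E)) (𝒞 : Set (CondRaw Ω E)) : Prop :=
  𝒞.Nonempty ∧ (∀ S ∈ 𝒞, IsCond P X S) ∧
    (∀ S ∈ 𝒞, ∀ T, IsCond P X T → ceq P S T → T ∈ 𝒞) ∧
    ∀ (A : Partition mΩ P) (S : ℕ → CondRaw Ω E), (∀ k, S k ∈ 𝒞) → condConcat P A S ∈ 𝒞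

/-- A stable σ-algebra on `X`. -/
def IsStableSigma (P : @Measure Ω mΩ) (X : Set (Ω → E)) (𝒳 : Set (CondRaw Ω E)) : Prop :=
  IsStableColl P X 𝒳 ∧ ctop X ∈ 𝒳 ∧ (∀ S ∈ 𝒳, ccompl P X S ∈ 𝒳) ∧
    ∀ S : ℕ → CondRaw Ω E, (∀ k, S k ∈ 𝒳) → cSupFam P X S ∈ 𝒳

/-- A stable Dynkin system on `X`. -/
def IsStableDynkin (P : @Measure Ω mΩ) (X : Set (Ω → E)) (𝒟 : Set (CondRaw Ω E)) : Prop :=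
  IsStableColl P X 𝒟 ∧ ctop X ∈ 𝒟 ∧ (∀ S ∈ 𝒟, ccompl P X S ∈ 𝒟) ∧
    ∀ S : ℕ → CondRaw Ω E, (∀ k, S k ∈ 𝒟) →
      (∀ i j, i ≠ j → cdisjoint P X (S i) (S j)) → cSupFam P X S ∈ 𝒟

/-- A stable ring on `X`. -/
def IsStableRing (P : @Measure Ω mΩ) (X : Set (Ω → E)) (𝒳 : Set (CondRaw Ω E)) : Prop :=
  IsStableColl P X 𝒳 ∧
    ∀ S ∈ 𝒳, ∀ T ∈ 𝒳, cInf₂ P X S (ccompl P X T) ∈ 𝒳 ∧ cSup₂ P X S T ∈ 𝒳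

/-- The stable σ-algebra generated by a collection `ℰ`. -/
def sigmaGen (P : @Measure Ω mΩ) (X : Set (Ω → E)) (ℰ : Set (CondRaw Ω E)) :
    Set (CondRaw Ω E) :=
  ⋂₀ {𝒳 | IsStableSigma P X 𝒳 ∧ ℰ ⊆ 𝒳}

/-- The stable Dynkin system generated by a collection `ℰ`. -/
def dynkinGen (P : @Measure Ω mΩ) (X : Set (Ω → E)) (ℰ : Set (CondRaw Ω E)) :
    Set (CondRaw Ω E) :=
  ⋂₀ {𝒟 | IsStableDynkin P X 𝒟 ∧ ℰ ⊆ 𝒟}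

/-! ### Stable set functions and stable measures -/

/-- A stable set function `μ : 𝒞 → L̄⁰₊` (represented by measurable representatives,
well defined modulo identification, and commuting with countable concatenations). -/
def IsStableSetFun (P : @Measure Ω mΩ) (𝒞 : Set (CondRaw Ω E))
    (μ : CondRaw Ω E → Ω → ℝ≥0∞) : Prop :=
  (∀ S ∈ 𝒞, Measurable[mΩ] (μ S)) ∧
    (∀ S ∈ 𝒞, ∀ T ∈ 𝒞, ceq P S T → μ S =ᵐ[P] μ T) ∧
    ∀ (A : Partition mΩ P) (S : ℕ → CondRaw Ω E), (∀ k, S k ∈ 𝒞) →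
      μ (condConcat P A S) =ᵐ[P] A.concat fun k => μ (S k)

/-- Property (M1): `μ(V|A) = μ(V|A)|A + 0|Aᶜ`. -/
def M1 (P : @Measure Ω mΩ) (𝒞 : Set (CondRaw Ω E)) (μ : CondRaw Ω E → Ω → ℝ≥0∞) : Prop :=
  ∀ S ∈ 𝒞, μ S =ᵐ[P] S.2.indicator (μ S)

/-- Property (M2): countable additivity on pairwise disjoint sequences whose
conditional union belongs to the domain. -/
def M2 (P : @Measure Ω mΩ) (X : Set (Ω → E)) (𝒳 : Set (CondRaw Ω E))
    (μ : CondRaw Ω E → Ω → ℝ≥0∞) : Prop :=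
  ∀ S : ℕ → CondRaw Ω E, (∀ k, S k ∈ 𝒳) →
    (∀ i j, i ≠ j → cdisjoint P X (S i) (S j)) → cSupFam P X S ∈ 𝒳 →
    μ (cSupFam P X S) =ᵐ[P] fun ω => ∑' k, μ (S k) ω

/-- Finite additivity: (M2) for finite pairwise disjoint families. -/
def FinAdd (P : @Measure Ω mΩ) (X : Set (Ω → E)) (𝒳 : Set (CondRaw Ω E))
    (μ : CondRaw Ω E → Ω → ℝ≥0∞) : Prop :=
  ∀ (n : ℕ) (S : Fin n → CondRaw Ω E), (∀ k, S k ∈ 𝒳) →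
    (∀ i j, i ≠ j → cdisjoint P X (S i) (S j)) → cSupFam P X S ∈ 𝒳 →
    μ (cSupFam P X S) =ᵐ[P] fun ω => ∑ k, μ (S k) ω

/-- A stable measure (or stable pre-measure, when the domain is merely a stable
ring): a stable set function satisfying (M1) and (M2). -/
def IsStableMeasureOn (P : @Measure Ω mΩ) (X : Set (Ω → E)) (𝒳 : Set (CondRaw Ω E))
    (μ : CondRaw Ω E → Ω → ℝ≥0∞) : Prop :=
  IsStableSetFun P 𝒳 μ ∧ M1 P 𝒳 μ ∧ M2 P X 𝒳 μ

/-- A finite stable measure. -/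
def IsFiniteStableMeasureOn (P : @Measure Ω mΩ) (X : Set (Ω → E))
    (𝒳 : Set (CondRaw Ω E)) (μ : CondRaw Ω E → Ω → ℝ≥0∞) : Prop :=
  IsStableMeasureOn P X 𝒳 μ ∧ ∀ᵐ ω ∂P, μ (ctop X) ω < ∞

/-- A stable probability measure. -/
def IsStableProbOn (P : @Measure Ω mΩ) (X : Set (Ω → E)) (𝒳 : Set (CondRaw Ω E))
    (μ : CondRaw Ω E → Ω → ℝ≥0∞) : Prop :=
  IsStableMeasureOn P X 𝒳 μ ∧ μ (ctop X) =ᵐ[P] fun _ => (1 : ℝ≥0∞)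

/-- A stable outer measure on the conditional power set of `X`. -/
def IsStableOuter (P : @Measure Ω mΩ) (X : Set (Ω → E))
    (μ : CondRaw Ω E → Ω → ℝ≥0∞) : Prop :=
  (∀ S, IsCond P X S → Measurable[mΩ] (μ S)) ∧
    (∀ S T, IsCond P X S → IsCond P X T → ceq P S T → μ S =ᵐ[P] μ T) ∧
    (∀ (A : Partition mΩ P) (S : ℕ → CondRaw Ω E), (∀ k, IsCond P X (S k)) →
      μ (condConcat P A S) =ᵐ[P] A.concat fun k => μ (S k)) ∧
    (∀ S, IsCond P X S → ∀ B, MeasurableSet[mΩ] B →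
      μ (crestrict S B) =ᵐ[P] B.indicator (μ S)) ∧
    (∀ S T, IsCond P X S → IsCond P X T → cle P S T → ∀ᵐ ω ∂P, μ S ω ≤ μ T ω) ∧
    ∀ S : ℕ → CondRaw Ω E, (∀ k, IsCond P X (S k)) →
      ∀ᵐ ω ∂P, μ (cSupFam P X S) ω ≤ ∑' k, μ (S k) ω

/-- Stable Carathéodory measurability with respect to a stable outer measure. -/
def CaraMeasurable (P : @Measure Ω mΩ) (X : Set (Ω → E))
    (μ : CondRaw Ω E → Ω → ℝ≥0∞) (S : CondRaw Ω E) : Prop :=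
  ∀ T, IsCond P X T →
    (fun ω => μ (cInf₂ P X T S) ω + μ (cInf₂ P X T (ccompl P X S)) ω) =ᵐ[P] μ T

/-! ### Stable functions, the stable Borel σ-algebra on `L⁰`, and the integral -/

/-- The stable set `L⁰_m(E)` of all (classes of) measurable functions `Ω → E`. -/
def l0m (P : @Measure Ω mΩ) (E : Type*) [MeasurableSpace E] : Set (Ω → E) :=
  {x | AEMeasurable x P}

/-- A stable function between stable sets of functions. -/
def StableFun (P : @Measure Ω mΩ) (X : Set (Ω → E)) (Y : Set (Ω → F'))
    (f : (Ω → E) → Ω → F') : Prop :=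
  (∀ x ∈ X, f x ∈ Y) ∧ (∀ x ∈ X, ∀ y ∈ X, x =ᵐ[P] y → f x =ᵐ[P] f y) ∧
    ∀ (A : Partition mΩ P) (x : ℕ → Ω → E), (∀ k, x k ∈ X) →
      f (A.concat x) =ᵐ[P] A.concat fun k => f (x k)

/-- The conditional preimage `f⁻¹(W|A)`. -/
def cPreimage (P : @Measure Ω mΩ) (X : Set (Ω → E)) (f : (Ω → E) → Ω → F')
    (W : CondRaw Ω F') : CondRaw Ω E :=
  ({x ∈ X | memOn P (largestSet P fun C => P (C \ W.2) = 0 ∧ ∃ x ∈ X, memOn P C (f x) W.1)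
      (f x) W.1},
    largestSet P fun C => P (C \ W.2) = 0 ∧ ∃ x ∈ X, memOn P C (f x) W.1)

/-- The stable Borel σ-algebra `B(L⁰)` on `L⁰`, generated by the stable open balls. -/
def borelL0 (P : @Measure Ω mΩ) : Set (CondRaw Ω ℝ) :=
  sigmaGen P (l0m P ℝ)
    {S | ∃ r ε : Ω → ℝ, AEMeasurable r P ∧ AEMeasurable ε P ∧ (∀ᵐ ω ∂P, 0 < ε ω) ∧
      ceq P S ({s | AEMeasurable s P ∧ ∀ᵐ ω ∂P, |s ω - r ω| < ε ω}, univ)}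

/-- A stably measurable function `f : X → L⁰` with respect to a stable σ-algebra `𝒳`. -/
def StablyMeasurable (P : @Measure Ω mΩ) (X : Set (Ω → E)) (𝒳 : Set (CondRaw Ω E))
    (f : (Ω → E) → Ω → ℝ) : Prop :=
  StableFun P X (l0m P ℝ) f ∧ ∀ W ∈ borelL0 P, cPreimage P X f W ∈ 𝒳

/-- The base set `A_x` of the stable indicator function of `S = V|A` at `x`. -/
def indBase (P : @Measure Ω mΩ) (S : CondRaw Ω E) (x : Ω → E) : Set Ω :=
  largestSet P fun C => P (C \ S.2) = 0 ∧ memOn P C x S.1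

/-- The stable indicator function `1_{V|A} : X → L⁰`. -/
def cIndicator (P : @Measure Ω mΩ) (S : CondRaw Ω E) (x : Ω → E) : Ω → ℝ :=
  (indBase P S x).indicator fun _ => (1 : ℝ)

/-- Data of a stable elementary function: coefficients and conditional sets. -/
def ElemRep (Ω E : Type*) := Σ n : ℕ, (Fin n → Ω → ℝ) × (Fin n → CondRaw Ω E)

/-- The function `∑_{k ≤ n} r_k 1_{V_k|A_k}` represented by `ρ`. -/
def repFun (P : @Measure Ω mΩ) (ρ : ElemRep Ω E) : (Ω → E) → Ω → ℝ :=
  fun x ω => ∑ k, ρ.2.1 k ω * cIndicator P (ρ.2.2 k) x ω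

/-- The representation `ρ` is admissible: nonnegative `L⁰`-coefficients and a finite
pairwise disjoint family in `𝒳` whose conditional union is `X`. -/
def GoodRep (P : @Measure Ω mΩ) (X : Set (Ω → E)) (𝒳 : Set (CondRaw Ω E))
    (ρ : ElemRep Ω E) : Prop :=
  (∀ k, AEMeasurable (ρ.2.1 k) P) ∧ (∀ k, ∀ᵐ ω ∂P, 0 ≤ ρ.2.1 k ω) ∧
    (∀ k, ρ.2.2 k ∈ 𝒳) ∧ (∀ i j, i ≠ j → cdisjoint P X (ρ.2.2 i) (ρ.2.2 j)) ∧
    ceq P (cSupFam P X ρ.2.2) (ctop X)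

/-- A stable elementary function. -/
def IsElementary (P : @Measure Ω mΩ) (X : Set (Ω → E)) (𝒳 : Set (CondRaw Ω E))
    (f : (Ω → E) → Ω → ℝ) : Prop :=
  ∃ ρ : ElemRep Ω E, GoodRep P X 𝒳 ρ ∧ ∀ x ∈ X, f x =ᵐ[P] repFun P ρ x

/-- The stable Lebesgue integral `∑_k r_k μ(V_k|A_k)` of the elementary representation. -/
def repInt (μ : CondRaw Ω E → Ω → ℝ≥0∞) (ρ : ElemRep Ω E) : Ω → ℝ≥0∞ :=
  fun ω => ∑ k, ENNReal.ofReal (ρ.2.1 k ω) * μ (ρ.2.2 k) ω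

/-- The stable Lebesgue integral of a nonnegative function, as the supremum of the
integrals of the dominated stable elementary functions. -/
def cIntNN (P : @Measure Ω mΩ) (X : Set (Ω → E)) (𝒳 : Set (CondRaw Ω E))
    (μ : CondRaw Ω E → Ω → ℝ≥0∞) (f : (Ω → E) → Ω → ℝ) : Ω → ℝ≥0∞ :=
  fun ω =>
    ⨆ ρ : {ρ : ElemRep Ω E // GoodRep P X 𝒳 ρ ∧
        ∀ x ∈ X, ∀ᵐ ω' ∂P, repFun P ρ x ω' ≤ f x ω'},
      repInt μ ρ.1 ω

/-- The positive part `f⁺` of an `L⁰`-valued function. -/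
def fplus (f : (Ω → E) → Ω → ℝ) : (Ω → E) → Ω → ℝ := fun x ω => max (f x ω) 0

/-- The negative part `f⁻` of an `L⁰`-valued function. -/
def fminus (f : (Ω → E) → Ω → ℝ) : (Ω → E) → Ω → ℝ := fun x ω => max (-(f x ω)) 0

/-- Stable integrability of `f : X → L⁰`. -/
def CIntegrable (P : @Measure Ω mΩ) (X : Set (Ω → E)) (𝒳 : Set (CondRaw Ω E))
    (μ : CondRaw Ω E → Ω → ℝ≥0∞) (f : (Ω → E) → Ω → ℝ) : Prop :=
  StablyMeasurable P X 𝒳 f ∧ (∀ᵐ ω ∂P, cIntNN P X 𝒳 μ (fplus f) ω < ∞) ∧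
    ∀ᵐ ω ∂P, cIntNN P X 𝒳 μ (fminus f) ω < ∞

/-- The stable Lebesgue integral `∫_X f dμ := ∫ f⁺ dμ − ∫ f⁻ dμ`. -/
def cInt (P : @Measure Ω mΩ) (X : Set (Ω → E)) (𝒳 : Set (CondRaw Ω E))
    (μ : CondRaw Ω E → Ω → ℝ≥0∞) (f : (Ω → E) → Ω → ℝ) : Ω → ℝ :=
  fun ω => (cIntNN P X 𝒳 μ (fplus f) ω).toReal - (cIntNN P X 𝒳 μ (fminus f) ω).toReal

/-! ### Products and sections -/

/-- The pairing `ω ↦ (x ω, y ω)`. -/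
def pairFn (x : Ω → E) (y : Ω → F') : Ω → E × F' := fun ω => (x ω, y ω)

/-- The Cartesian product `X × Y` of two stable sets, as a stable set of functions
`Ω → E × F'`. -/
def prodSet (P : @Measure Ω mΩ) (X : Set (Ω → E)) (Y : Set (Ω → F')) :
    Set (Ω → E × F') :=
  {z | ∃ x ∈ X, ∃ y ∈ Y, z =ᵐ[P] pairFn x y}

/-- The conditional rectangle `V|A × W|B := (V × W)|A ∩ B`. -/
def crect (P : @Measure Ω mΩ) (S : CondRaw Ω E) (T : CondRaw Ω F') :
    CondRaw Ω (E × F') :=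
  (prodSet P S.1 T.1, S.2 ∩ T.2)

/-- The stable product σ-algebra `𝒳 ⊗ 𝒴`, generated by the conditional rectangles. -/
def prodSigma (P : @Measure Ω mΩ) (X : Set (Ω → E)) (Y : Set (Ω → F'))
    (𝒳 : Set (CondRaw Ω E)) (𝒴 : Set (CondRaw Ω F')) : Set (CondRaw Ω (E × F')) :=
  sigmaGen P (prodSet P X Y) {R | ∃ S ∈ 𝒳, ∃ T ∈ 𝒴, ceq P R (crect P S T)}

/-- The conditional `x`-section `(Z|C)_x` of a conditional subset of `X × Y`. -/
def xsection (P : @Measure Ω mΩ) (Y : Set (Ω → F')) (Z : CondRaw Ω (E × F'))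
    (x : Ω → E) : CondRaw Ω F' :=
  ({y ∈ Y | memOn P (largestSet P fun D => P (D \ Z.2) = 0 ∧ ∃ y ∈ Y, memOn P D (pairFn x y) Z.1)
      (pairFn x y) Z.1},
    largestSet P fun D => P (D \ Z.2) = 0 ∧ ∃ y ∈ Y, memOn P D (pairFn x y) Z.1)

/-- The conditional `y`-section `(Z|C)_y` of a conditional subset of `X × Y`. -/
def ysection (P : @Measure Ω mΩ) (X : Set (Ω → E)) (Z : CondRaw Ω (E × F'))
    (y : Ω → F') : CondRaw Ω E :=
  ({x ∈ X | memOn P (largestSet P fun D => P (D \ Z.2) = 0 ∧ ∃ x ∈ X, memOn P D (pairFn x y) Z.1)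
      (pairFn x y) Z.1},
    largestSet P fun D => P (D \ Z.2) = 0 ∧ ∃ x ∈ X, memOn P D (pairFn x y) Z.1)

/-! ### Conditional subsets of `L⁰_m(E)` associated to measurable sets -/

/-- `L⁰_m(F) = {x ∈ L⁰_m(E) : x ∈ F a.s.}` for a measurable `F ⊆ E`. -/
def l0mF (P : @Measure Ω mΩ) {E : Type*} [MeasurableSpace E] (F : Set E) : Set (Ω → E) :=
  {x | AEMeasurable x P ∧ ∀ᵐ ω ∂P, x ω ∈ F}

/-- `∑ L⁰_m(F_k)|A_k = {x ∈ L⁰_m(E) : x ∈ F_k a.s. on A_k for all k}`. -/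
def l0mConcat (P : @Measure Ω mΩ) {E : Type*} [MeasurableSpace E]
    (A : Partition mΩ P) (F : ℕ → Set E) : Set (Ω → E) :=
  {x | AEMeasurable x P ∧ ∀ k, ∀ᵐ ω ∂P, ω ∈ A.part k → x ω ∈ F k}

/-- The stable ring `ℛ` on `L⁰_m(E)` generated by a measurable structure on `E`:
all conditional subsets of the form `(∑ L⁰_m(F_k)|A_k)|B`. -/
def ringR (P : @Measure Ω mΩ) (E : Type*) [MeasurableSpace E] : Set (CondRaw Ω E) :=
  {S | ∃ (F : ℕ → Set E) (A : Partition mΩ P) (B : Set Ω),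
    (∀ k, MeasurableSet (F k)) ∧ MeasurableSet[mΩ] B ∧
      ceq P S (l0mConcat P A F, B)}

end CondMT

namespace CondMT

section Helpers

variable {Ω E : Type*} {mΩ : MeasurableSpace Ω} {P : @Measure Ω mΩ}

/-- `x|C` lies in the conditional set `S`. -/
def InOn (P : @Measure Ω mΩ) (S : CondRaw Ω E) (C : Set Ω) (x : Ω → E) : Prop :=
  (∀ᵐ ω ∂P, ω ∈ C → ω ∈ S.2) ∧ memOn P C x S.1

/-- `G` is a set in the total space whose slices are the indicator bases of `S`. -/
def Rep (P : @Measure Ω mΩ) (X : Set (Ω → E)) (G : Set ((Ω → E) × Ω)) (S : CondRaw Ω E) : Prop :=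
  ∀ x ∈ X, NullMeasurableSet {ω | (x, ω) ∈ G} P ∧
    ∀ C, MeasurableSet C → (InOn P S C x ↔ ∀ᵐ ω ∂P, ω ∈ C → (x, ω) ∈ G)

lemma null_iff (A B : Set Ω) : P (A \ B) = 0 ↔ ∀ᵐ ω ∂P, ω ∈ A → ω ∈ B := by
  rw [← ae_le_set]; rfl

lemma exists_meas {s : Set Ω} (h : NullMeasurableSet s P) :
    ∃ t, MeasurableSet t ∧ ∀ᵐ ω ∂P, (ω ∈ t ↔ ω ∈ s) := by
  obtain ⟨t, -, ht, h2⟩ := h.exists_measurable_superset_ae_eq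
  exact ⟨t, ht, h2.mem_iff⟩

lemma concat_eq {F : Type*} (A : Partition mΩ P) (x : ℕ → Ω → F) :
    ∀ᵐ ω ∂P, ∀ k, ω ∈ A.part k → A.concat x ω = x k ω := by
  have h : ∀ i j, i ≠ j → ∀ᵐ ω ∂P, ¬ (ω ∈ A.part i ∧ ω ∈ A.part j) := by
    intro i j hij
    have := A.disj i j hij
    rw [measure_eq_zero_iff_ae_notMem] at this
    exact this
  have h' : ∀ᵐ ω ∂P, ∀ i j, i ≠ j → ¬ (ω ∈ A.part i ∧ ω ∈ A.part j) := by
    rw [ae_all_iff]; intro i; rw [ae_all_iff]; intro j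
    by_cases hij : i = j
    · simp [hij]
    · filter_upwards [h i j hij] with ω hω _ using hω
  filter_upwards [h'] with ω hω k hk
  classical
  have hex : ∃ k, ω ∈ A.part k := ⟨k, hk⟩
  have : Nat.find hex = k := by
    by_contra hne
    exact hω _ _ hne ⟨Nat.find_spec hex, hk⟩
  unfold Partition.concat
  rw [dif_pos hex]
  have h2 : (Nat.find hex) = k := this
  convert congrArg (fun n => x n ω) h2

lemma part_cover (A : Partition mΩ P) : ∀ᵐ ω ∂P, ∃ k, ω ∈ A.part k := by
  have := A.cover
  rw [measure_eq_zero_iff_ae_notMem] at this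
  filter_upwards [this] with ω hω
  simpa using hω

lemma part_disj (A : Partition mΩ P) :
    ∀ᵐ ω ∂P, ∀ i j, ω ∈ A.part i → ω ∈ A.part j → i = j := by
  have h := concat_eq A (fun n _ => n)
  filter_upwards [h] with ω hω i j hi hj
  rw [← hω i hi, ← hω j hj]

/-- Gluing. -/
lemma glue {V : Set (Ω → E)} (hV : Stable P V) (C : ℕ → Set Ω) (hC : ∀ k, MeasurableSet (C k))
    (y : ℕ → Ω → E) (hy : ∀ k, y k ∈ V) :
    ∃ z ∈ V, ∀ᵐ ω ∂P, ∀ k, ω ∈ disjointed C k → z ω = y k ω := by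
  let A : Partition mΩ P :=
    { part := fun k => Nat.casesOn k (⋃ k, C k)ᶜ (fun n => disjointed C n)
      meas := by
        rintro (_ | n)
        · exact (MeasurableSet.iUnion hC).compl
        · exact MeasurableSet.disjointed hC n
      disj := by
        have key : ∀ n, (⋃ k, C k)ᶜ ∩ disjointed C n = ∅ := by
          intro n
          ext ω
          simp only [mem_inter_iff, mem_compl_iff, mem_iUnion, mem_empty_iff_false, iff_false]
          rintro ⟨h1, h2⟩
          exact h1 ⟨n, disjointed_subset C n h2⟩
        rintro (_ | i) (_ | j) hij
        · exact absurd rfl hij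
        · change P ((⋃ k, C k)ᶜ ∩ disjointed C j) = 0
          rw [key, measure_empty]
        · change P (disjointed C i ∩ (⋃ k, C k)ᶜ) = 0
          rw [inter_comm, key, measure_empty]
        · have : i ≠ j := fun h => hij (by rw [h])
          have := (disjoint_disjointed C this)
          rw [Function.onFun, Set.disjoint_iff_inter_eq_empty] at this
          simp [this]
      cover := by
        have : (⋃ k : ℕ, (Nat.casesOn k (⋃ k, C k)ᶜ (fun n => disjointed C n) : Set Ω)) = univ := by
          rw [eq_univ_iff_forall]
          intro ω
          by_cases h : ω ∈ ⋃ k, C k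
          · rw [← iUnion_disjointed] at h
            obtain ⟨k, hk⟩ := mem_iUnion.1 h
            exact mem_iUnion.2 ⟨k + 1, hk⟩
          · exact mem_iUnion.2 ⟨0, h⟩
        rw [this]; simp }
  refine ⟨A.concat (fun k => Nat.casesOn k (y 0) y), hV.2.2 A _ ?_, ?_⟩
  · rintro (_ | k)
    · exact hy 0
    · exact hy k
  · filter_upwards [concat_eq A (fun k => Nat.casesOn k (y 0) y)] with ω hω k hk
    exact hω (k + 1) hk

/-- Exhaustion. -/
lemma exhaust [IsProbabilityMeasure P] (𝒜 : Set (Set Ω)) (hne : 𝒜.Nonempty)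
    (hm : ∀ A ∈ 𝒜, NullMeasurableSet A P)
    (hcl : ∀ A : ℕ → Set Ω, (∀ k, A k ∈ 𝒜) →
      ∃ B ∈ 𝒜, ∀ k, ∀ᵐ ω ∂P, ω ∈ A k → ω ∈ B) :
    ∃ B ∈ 𝒜, ∀ A ∈ 𝒜, ∀ᵐ ω ∂P, ω ∈ A → ω ∈ B := by
  have hne' : (P '' 𝒜).Nonempty := hne.image _
  obtain ⟨u, -, hu, hmem⟩ := exists_seq_tendsto_sSup hne' (OrderTop.bddAbove _)
  choose A hA hAu using hmem
  obtain ⟨B, hB, hAB⟩ := hcl A hA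
  have hBsup : P B = sSup (P '' 𝒜) := by
    apply le_antisymm
    · exact le_sSup ⟨B, hB, rfl⟩
    · refine le_of_tendsto' hu fun n => ?_
      rw [← hAu n]
      exact measure_mono_ae (hAB n)
  refine ⟨B, hB, fun A' hA' => ?_⟩
  obtain ⟨D, hD, hD'⟩ := hcl (fun k => if k = 0 then B else A') (by
    intro k; by_cases h : k = 0 <;> simp [h, hB, hA'])
  have h0 : B ≤ᵐ[P] D := by
    have : ∀ᵐ ω ∂P, ω ∈ B → ω ∈ D := by simpa using hD' 0
    exact this
  have h1 : ∀ᵐ ω ∂P, ω ∈ A' → ω ∈ D := by simpa using hD' 1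
  have hle : P D ≤ P B := by rw [hBsup]; exact le_sSup ⟨D, hD, rfl⟩
  have := ae_eq_of_ae_subset_of_measure_ge h0 hle (hm B hB) (measure_ne_top _ _)
  filter_upwards [h1, this.mem_iff] with ω h1 h2 h3 using h2.2 (h1 h3)

lemma InOn.mono {S : CondRaw Ω E} {C D : Set Ω} {x : Ω → E} (h : InOn P S C x)
    (hD : ∀ᵐ ω ∂P, ω ∈ D → ω ∈ C) : InOn P S D x := by
  obtain ⟨h1, y, hy, h2⟩ := h
  refine ⟨?_, y, hy, ?_⟩
  · filter_upwards [h1, hD] with ω h1 h2 h3 using h1 (h2 h3)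
  · filter_upwards [h2, hD] with ω h1 h2 h3 using h1 (h2 h3)

lemma exists_rep [IsProbabilityMeasure P] {X : Set (Ω → E)} {S : CondRaw Ω E}
    (hS : IsCond P X S) : ∃ G, Rep P X G S := by
  have key : ∀ x : Ω → E, ∃ B : Set Ω, MeasurableSet B ∧ InOn P S B x ∧
      ∀ C, MeasurableSet C → InOn P S C x → ∀ᵐ ω ∂P, ω ∈ C → ω ∈ B := by
    intro x
    suffices hs : ∃ B ∈ {C | MeasurableSet C ∧ InOn P S C x},
        ∀ A ∈ {C | MeasurableSet C ∧ InOn P S C x}, ∀ᵐ ω ∂P, ω ∈ A → ω ∈ B by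
      obtain ⟨B, hB, h⟩ := hs
      exact ⟨B, hB.1, hB.2, fun C h1 h2 => h C ⟨h1, h2⟩⟩
    apply exhaust
    · obtain ⟨y, hy⟩ := hS.1.1
      exact ⟨∅, MeasurableSet.empty, by simp, y, hy, by simp⟩
    · exact fun A hA => hA.1.nullMeasurableSet
    · intro A hA
      choose hm hb y hy hxy using hA
      obtain ⟨z, hz, hzy⟩ := glue hS.1 A hm y hy
      refine ⟨⋃ k, A k, ⟨MeasurableSet.iUnion hm, ?_, z, hz, ?_⟩, ?_⟩
      · filter_upwards [ae_all_iff.2 hb] with ω h h2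
        obtain ⟨k, hk⟩ := mem_iUnion.1 h2
        exact h k hk
      · filter_upwards [ae_all_iff.2 hxy, hzy] with ω h h' h2
        rw [← iUnion_disjointed] at h2
        obtain ⟨k, hk⟩ := mem_iUnion.1 h2
        rw [h' k hk, h k (disjointed_subset A k hk)]
      · exact fun k => Eventually.of_forall fun ω hω => mem_iUnion.2 ⟨k, hω⟩
  choose B hB1 hB2 hB3 using key
  refine ⟨{p | p.2 ∈ B p.1}, fun x hx => ⟨(hB1 x).nullMeasurableSet, fun C hC => ⟨hB3 x C hC, ?_⟩⟩⟩
  intro h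
  exact (hB2 x).mono h

/-- Locality. -/
def Loc (P : @Measure Ω mΩ) (X : Set (Ω → E)) (G : Set ((Ω → E) × Ω)) : Prop :=
  (∀ x ∈ X, NullMeasurableSet {ω | (x, ω) ∈ G} P) ∧
  ∀ x ∈ X, ∀ y ∈ X, ∀ C, MeasurableSet C → (∀ᵐ ω ∂P, ω ∈ C → x ω = y ω) →
    ∀ᵐ ω ∂P, ω ∈ C → (x, ω) ∈ G → (y, ω) ∈ G

lemma Rep.loc {X : Set (Ω → E)} {G} {S : CondRaw Ω E} (h : Rep P X G S) : Loc P X G := by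
  refine ⟨fun x hx => (h x hx).1, fun x hx y hy C hC hxy => ?_⟩
  obtain ⟨D, hD, hDG⟩ := exists_meas (h x hx).1
  have h1 : InOn P S (C ∩ D) x := by
    rw [(h x hx).2 _ (hC.inter hD)]
    filter_upwards [hDG] with ω h1 h2 using h1.1 h2.2
  obtain ⟨h2, z, hz, hxz⟩ := h1
  have h3 : InOn P S (C ∩ D) y := by
    refine ⟨h2, z, hz, ?_⟩
    filter_upwards [hxz, hxy] with ω h1 h2 h3
    rw [← h1 h3, h2 h3.1]
  rw [(h y hy).2 _ (hC.inter hD)] at h3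
  filter_upwards [h3, hDG] with ω h1 h2 h3 h4 using h1 ⟨h3, h2.2 h4⟩

lemma exists_cond [IsProbabilityMeasure P] {X : Set (Ω → E)} (hX : Stable P X) {G}
    (hG : Loc P X G) : ∃ S, IsCond P X S ∧ Rep P X G S := by
  obtain ⟨hm, hl⟩ := hG
  obtain ⟨_, ⟨x₀, hx₀, rfl⟩, hmax⟩ := exhaust (P := P) ((fun x => {ω | (x, ω) ∈ G}) '' X)
    (hX.1.image _) (by rintro _ ⟨x, hx, rfl⟩; exact hm x hx) (by
      intro A hA
      choose x hx hxA using hA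
      choose T hT hTG using fun k => exists_meas (hm _ (hx k))
      obtain ⟨z, hz, hzx⟩ := glue hX T hT x hx
      refine ⟨_, ⟨z, hz, rfl⟩, fun k => ?_⟩
      have h1 : ∀ k, ∀ᵐ ω ∂P, ω ∈ disjointed T k → (x k, ω) ∈ G → (z, ω) ∈ G := by
        intro k
        apply hl _ (hx k) _ hz _ (MeasurableSet.disjointed hT k)
        filter_upwards [hzx] with ω h1 h2 using (h1 k h2).symm
      filter_upwards [ae_all_iff.2 h1, ae_all_iff.2 hTG] with ω h1 h2 h3
      rw [← hxA k] at h3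
      have h4 : ω ∈ ⋃ k, T k := mem_iUnion.2 ⟨k, (h2 k).2 h3⟩
      rw [← iUnion_disjointed] at h4
      obtain ⟨j, hj⟩ := mem_iUnion.1 h4
      exact h1 j hj ((h2 j).1 (disjointed_subset T j hj)))
  obtain ⟨A, hA, hAG⟩ := exists_meas (hm x₀ hx₀)
  have hmax' : ∀ x ∈ X, ∀ᵐ ω ∂P, (x, ω) ∈ G → ω ∈ A := by
    intro x hx
    filter_upwards [hmax _ ⟨x, hx, rfl⟩, hAG] with ω h1 h2 h3 using h2.2 (h1 h3)
  refine ⟨({x | x ∈ X ∧ ∀ᵐ ω ∂P, ω ∈ A → (x, ω) ∈ G}, A), ⟨⟨?_, ?_, ?_⟩, fun x hx => hx.1, hA⟩, ?_⟩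
  · exact ⟨x₀, hx₀, by filter_upwards [hAG] with ω h using h.1⟩
  · rintro x ⟨hx, hxA⟩ y hxy
    have hy := hX.2.1 x hx y hxy
    refine ⟨hy, ?_⟩
    filter_upwards [hl x hx y hy univ MeasurableSet.univ
      (by filter_upwards [hxy] with ω h _ using h), hxA] with ω h1 h2 h3 using h1 trivial (h2 h3)
  · intro B x hx
    have hc := hX.2.2 B x (fun k => (hx k).1)
    refine ⟨hc, ?_⟩
    have h1 : ∀ k, ∀ᵐ ω ∂P, ω ∈ B.part k → (x k, ω) ∈ G → (B.concat x, ω) ∈ G := by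
      intro k
      apply hl _ (hx k).1 _ hc _ (B.meas k)
      filter_upwards [concat_eq B x] with ω h1 h2 using (h1 k h2).symm
    filter_upwards [ae_all_iff.2 h1, part_cover B, ae_all_iff.2 (fun k => (hx k).2)]
      with ω h1 h2 h3 h4
    obtain ⟨k, hk⟩ := h2
    exact h1 k hk (h3 k h4)
  · refine fun x hx => ⟨hm x hx, fun C hC => ⟨?_, ?_⟩⟩
    · rintro ⟨h1, y, ⟨hy, hyA⟩, hxy⟩
      filter_upwards [h1, hyA, hl y hy x hx C hC
        (by filter_upwards [hxy] with ω h h' using (h h').symm)] with ω h1 h2 h3 h4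
      exact h3 h4 (h2 (h1 h4))
    · intro h
      refine ⟨?_, ?_⟩
      · filter_upwards [h, hmax' x hx] with ω h1 h2 h3 using h2 (h1 h3)
      · obtain ⟨z, hz, hzx⟩ := glue hX (fun k => if k = 0 then C else univ)
          (by intro k; by_cases hk : k = 0 <;> simp [hk, hC])
          (fun k => if k = 0 then x else x₀) (by intro k; by_cases hk : k = 0 <;> simp [hk, hx, hx₀])
        have e0 : ∀ᵐ ω ∂P, ω ∈ C → x ω = z ω := by
          filter_upwards [hzx] with ω h1 h2
          have := h1 0 (by simpa using h2)
          simpa using this.symm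
        have e1 : ∀ᵐ ω ∂P, ω ∈ Cᶜ → x₀ ω = z ω := by
          filter_upwards [hzx] with ω h1 h2
          have := h1 1 (by
            rw [show (1 : ℕ) = 0 + 1 from rfl, disjointed_add_one]
            simpa using h2)
          simpa using this.symm
        refine ⟨z, ⟨hz, ?_⟩, e0⟩
        filter_upwards [hl x hx z hz C hC e0, hl x₀ hx₀ z hz Cᶜ hC.compl e1, h, hAG]
          with ω h1 h2 h3 h4 h5
        by_cases hω : ω ∈ C
        · exact h1 hω (h3 hω)
        · exact h2 hω (h4.1 h5)

lemma cle_iff {X : Set (Ω → E)} {G H} {S T : CondRaw Ω E} (hS : IsCond P X S)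
    (hG : Rep P X G S) (hH : Rep P X H T) :
    cle P S T ↔ ∀ x ∈ X, ∀ᵐ ω ∂P, (x, ω) ∈ G → (x, ω) ∈ H := by
  constructor
  · rintro ⟨h1, h2⟩ x hx
    rw [null_iff] at h1
    obtain ⟨C, hC, hCG⟩ := exists_meas (hG x hx).1
    obtain ⟨h3, y, hy, hxy⟩ := ((hG x hx).2 C hC).2
      (by filter_upwards [hCG] with ω h using h.1)
    obtain ⟨z, hz, hyz⟩ := h2 y hy
    have : InOn P T C x := by
      refine ⟨?_, z, hz, ?_⟩
      · filter_upwards [h1, h3] with ω a b c using a (b c)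
      · filter_upwards [hxy, hyz, h3] with ω a b c d
        rw [a d, b (c d)]
    rw [(hH x hx).2 C hC] at this
    filter_upwards [this, hCG] with ω a b c using a (b.2 c)
  · intro h
    have key : ∀ x ∈ S.1, InOn P T S.2 x := by
      intro x hx
      have hxX := hS.2.1 hx
      rw [(hH x hxX).2 _ hS.2.2]
      have : InOn P S S.2 x := ⟨by simp, x, hx, by simp⟩
      rw [(hG x hxX).2 _ hS.2.2] at this
      filter_upwards [this, h x hxX] with ω a b c using b (a c)
    obtain ⟨x, hx⟩ := hS.1.1
    exact ⟨(null_iff _ _).2 (key x hx).1, fun x hx => (key x hx).2⟩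

lemma rep_congr {X : Set (Ω → E)} {G H} {S : CondRaw Ω E}
    (hG : Rep P X G S) (h : ∀ x ∈ X, ∀ᵐ ω ∂P, (x, ω) ∈ G ↔ (x, ω) ∈ H) : Rep P X H S := by
  intro x hx
  refine ⟨(hG x hx).1.congr ?_, fun C hC => ?_⟩
  · exact Filter.eventuallyEq_set.2 (h x hx)
  · rw [(hG x hx).2 C hC]
    constructor
    · intro h'
      filter_upwards [h x hx, h'] with ω a b c using a.1 (b c)
    · intro h'
      filter_upwards [h x hx, h'] with ω a b c using a.2 (b c)

lemma rep_unique {X : Set (Ω → E)} {G} {S T : CondRaw Ω E} (hS : IsCond P X S)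
    (hT : IsCond P X T) (h1 : Rep P X G S) (h2 : Rep P X G T) : ceq P S T :=
  ⟨(cle_iff hS h1 h2).2 (by simp), (cle_iff hT h2 h1).2 (by simp)⟩

lemma rep_ceq [IsProbabilityMeasure P] {X : Set (Ω → E)} {G} {S T : CondRaw Ω E}
    (hS : IsCond P X S) (hT : IsCond P X T) (h1 : Rep P X G S) (h : ceq P S T) : Rep P X G T := by
  obtain ⟨H, hH⟩ := exists_rep hT
  have a := (cle_iff hS h1 hH).1 h.1
  have b := (cle_iff hT hH h1).1 h.2
  refine rep_congr hH fun x hx => ?_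
  filter_upwards [a x hx, b x hx] with ω a b using ⟨b, a⟩

lemma rep_cSup [IsProbabilityMeasure P] {X : Set (Ω → E)} {G} {S : CondRaw Ω E}
    {s : Set (CondRaw Ω E)} (hG : Rep P X G S) (hs : IsSupOf P X s S) :
    IsCond P X (cSup P X s) ∧ Rep P X G (cSup P X s) := by
  have hex : ∃ a, IsSupOf P X s a := ⟨S, hs⟩
  have hc : IsSupOf P X s (cSup P X s) := by
    unfold cSup; rw [dif_pos hex]; exact hex.choose_spec
  exact ⟨hc.1, rep_ceq hs.1 hc.1 hG ⟨hs.2.2 _ hc.1 hc.2.1, hc.2.2 _ hs.1 hs.2.1⟩⟩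

lemma rep_cInf [IsProbabilityMeasure P] {X : Set (Ω → E)} {G} {S : CondRaw Ω E}
    {s : Set (CondRaw Ω E)} (hG : Rep P X G S) (hs : IsInfOf P X s S) :
    IsCond P X (cInf P X s) ∧ Rep P X G (cInf P X s) := by
  have hex : ∃ a, IsInfOf P X s a := ⟨S, hs⟩
  have hc : IsInfOf P X s (cInf P X s) := by
    unfold cInf; rw [dif_pos hex]; exact hex.choose_spec
  exact ⟨hc.1, rep_ceq hs.1 hc.1 hG ⟨hc.2.2 _ hs.1 hs.2.1, hs.2.2 _ hc.1 hc.2.1⟩⟩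

lemma rep_cSupFam [IsProbabilityMeasure P] {X : Set (Ω → E)} (hX : Stable P X)
    {G : ℕ → Set ((Ω → E) × Ω)} {S : ℕ → CondRaw Ω E} (hS : ∀ k, IsCond P X (S k))
    (hG : ∀ k, Rep P X (G k) (S k)) :
    IsCond P X (cSupFam P X S) ∧ Rep P X (⋃ k, G k) (cSupFam P X S) := by
  have hloc : Loc P X (⋃ k, G k) := by
    refine ⟨fun x hx => ?_, fun x hx y hy C hC hxy => ?_⟩
    · have : {ω | (x, ω) ∈ ⋃ k, G k} = ⋃ k, {ω | (x, ω) ∈ G k} := by ext; simp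
      rw [this]
      exact NullMeasurableSet.iUnion fun k => (hG k x hx).1
    · filter_upwards [ae_all_iff.2 fun k => (hG k).loc.2 x hx y hy C hC hxy] with ω h h1 h2
      obtain ⟨k, hk⟩ := mem_iUnion.1 h2
      exact mem_iUnion.2 ⟨k, h k h1 hk⟩
  obtain ⟨T, hT, hGT⟩ := exists_cond hX hloc
  refine rep_cSup hGT ⟨hT, ?_, ?_⟩
  · rintro _ ⟨k, rfl⟩
    rw [cle_iff (hS k) (hG k) hGT]
    exact fun x hx => Eventually.of_forall fun ω h => mem_iUnion.2 ⟨k, h⟩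
  · intro c hc hb
    obtain ⟨H, hH⟩ := exists_rep hc
    rw [cle_iff hT hGT hH]
    intro x hx
    filter_upwards [ae_all_iff.2 fun k => (cle_iff (hS k) (hG k) hH).1 (hb _ ⟨k, rfl⟩) x hx]
      with ω h h2
    obtain ⟨k, hk⟩ := mem_iUnion.1 h2
    exact h k hk

lemma rep_cInf₂ [IsProbabilityMeasure P] {X : Set (Ω → E)} (hX : Stable P X)
    {G H : Set ((Ω → E) × Ω)} {S T : CondRaw Ω E} (hS : IsCond P X S) (hT : IsCond P X T)
    (hG : Rep P X G S) (hH : Rep P X H T) :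
    IsCond P X (cInf₂ P X S T) ∧ Rep P X (G ∩ H) (cInf₂ P X S T) := by
  have hloc : Loc P X (G ∩ H) := by
    refine ⟨fun x hx => (hG x hx).1.inter (hH x hx).1, fun x hx y hy C hC hxy => ?_⟩
    filter_upwards [hG.loc.2 x hx y hy C hC hxy, hH.loc.2 x hx y hy C hC hxy] with ω a b c d
    exact ⟨a c d.1, b c d.2⟩
  obtain ⟨U, hU, hGU⟩ := exists_cond hX hloc
  refine rep_cInf hGU ⟨hU, ?_, ?_⟩
  · rintro b (rfl | rfl)
    · rw [cle_iff hU hGU hG]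
      exact fun x hx => Eventually.of_forall fun ω h => h.1
    · rw [cle_iff hU hGU hH]
      exact fun x hx => Eventually.of_forall fun ω h => h.2
  · intro c hc hb
    obtain ⟨K, hK⟩ := exists_rep hc
    rw [cle_iff hc hK hGU]
    intro x hx
    filter_upwards [(cle_iff hc hK hG).1 (hb S (by simp)) x hx,
      (cle_iff hc hK hH).1 (hb T (by simp)) x hx] with ω a b h using ⟨a h, b h⟩

lemma rep_cbot {X : Set (Ω → E)} : Rep P X ∅ (cbot X) := by
  intro x hx
  refine ⟨by simp, fun C hC => ⟨fun h => by simpa [cbot] using h.1, fun h => ⟨by simpa [cbot] using h, x, hx, by simp⟩⟩⟩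

lemma rep_ctop {X : Set (Ω → E)} : Rep P X univ (ctop X) := by
  intro x hx
  refine ⟨by simp, fun C hC => ⟨fun h => by simp, fun h => ⟨by simp [ctop], x, hx, by simp⟩⟩⟩

lemma isCond_cbot {X : Set (Ω → E)} (hX : Stable P X) : IsCond P X (cbot X) :=
  ⟨hX, subset_rfl, MeasurableSet.empty⟩

lemma isCond_ctop {X : Set (Ω → E)} (hX : Stable P X) : IsCond P X (ctop X) :=
  ⟨hX, subset_rfl, MeasurableSet.univ⟩

lemma cdisjoint_iff [IsProbabilityMeasure P] {X : Set (Ω → E)} (hX : Stable P X)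
    {G H : Set ((Ω → E) × Ω)} {S T : CondRaw Ω E} (hS : IsCond P X S) (hT : IsCond P X T)
    (hG : Rep P X G S) (hH : Rep P X H T) :
    cdisjoint P X S T ↔ ∀ x ∈ X, ∀ᵐ ω ∂P, (x, ω) ∈ G → (x, ω) ∉ H := by
  obtain ⟨h1, h2⟩ := rep_cInf₂ hX hS hT hG hH
  unfold cdisjoint ceq
  rw [cle_iff h1 h2 rep_cbot, cle_iff (isCond_cbot hX) rep_cbot h2]
  simp

lemma rep_ccompl [IsProbabilityMeasure P] {X : Set (Ω → E)} (hX : Stable P X)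
    {G : Set ((Ω → E) × Ω)} {S : CondRaw Ω E} (hS : IsCond P X S)
    (hG : Rep P X G S) :
    IsCond P X (ccompl P X S) ∧ Rep P X Gᶜ (ccompl P X S) := by
  have hloc : Loc P X Gᶜ := by
    refine ⟨fun x hx => (hG x hx).1.compl, fun x hx y hy C hC hxy => ?_⟩
    filter_upwards [hG.loc.2 y hy x hx C hC
      (by filter_upwards [hxy] with ω h h' using (h h').symm)] with ω a b c d using c (a b d)
  obtain ⟨U, hU, hGU⟩ := exists_cond hX hloc
  refine rep_cSup hGU ⟨hU, ?_, ?_⟩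
  · rintro b ⟨hb, hbd⟩
    obtain ⟨H, hH⟩ := exists_rep hb
    rw [cle_iff hb hH hGU]
    exact (cdisjoint_iff hX hb hS hH hG).1 hbd
  · intro c hc hb
    apply hb
    refine ⟨hU, ?_⟩
    rw [cdisjoint_iff hX hU hS hGU hG]
    exact fun x hx => Eventually.of_forall fun ω h => h

lemma rep_condConcat {X : Set (Ω → E)} (A : Partition mΩ P)
    {G : ℕ → Set ((Ω → E) × Ω)} {S : ℕ → CondRaw Ω E}
    (hG : ∀ k, Rep P X (G k) (S k)) :
    Rep P X (⋃ k, G k ∩ Prod.snd ⁻¹' (A.part k)) (condConcat P A S) := by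
  intro x hx
  refine ⟨?_, fun C hC => ⟨?_, fun h => ?_⟩⟩
  · have : {ω | (x, ω) ∈ ⋃ k, G k ∩ Prod.snd ⁻¹' (A.part k)} =
        ⋃ k, {ω | (x, ω) ∈ G k} ∩ A.part k := by ext; simp
    rw [this]
    exact NullMeasurableSet.iUnion fun k => (hG k x hx).1.inter (A.meas k).nullMeasurableSet
  · rintro ⟨h1, f, ⟨y, hy, hfy⟩, hxf⟩
    have key : ∀ k, InOn P (S k) (C ∩ A.part k) x := by
      intro k
      refine ⟨?_, y k, hy k, ?_⟩
      · filter_upwards [h1, part_disj A] with ω a b c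
        obtain ⟨j, hj⟩ := mem_iUnion.1 (a c.1)
        have := b j k hj.1 c.2
        rw [← this]; exact hj.2
      · filter_upwards [hfy, hxf, concat_eq A y] with ω a b c d
        rw [b d.1, a, c k d.2]
    have key' := fun k => ((hG k x hx).2 _ (hC.inter (A.meas k))).1 (key k)
    filter_upwards [ae_all_iff.2 key', part_cover A] with ω a ⟨k, hk⟩ c
    exact mem_iUnion.2 ⟨k, a k ⟨c, hk⟩, hk⟩
  · have key : ∀ k, InOn P (S k) (C ∩ A.part k) x := by
      intro k
      rw [(hG k x hx).2 _ (hC.inter (A.meas k))]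
      filter_upwards [h, part_disj A] with ω a b c
      obtain ⟨j, hj⟩ := mem_iUnion.1 (a c.1)
      have := b j k hj.2 c.2
      rw [← this]; exact hj.1
    choose h1 y hy hxy using key
    refine ⟨?_, A.concat y, ⟨y, hy, ae_eq_refl _⟩, ?_⟩
    · filter_upwards [ae_all_iff.2 h1, part_cover A] with ω a ⟨k, hk⟩ c
      exact mem_iUnion.2 ⟨k, hk, a k ⟨c, hk⟩⟩
    · filter_upwards [ae_all_iff.2 hxy, part_cover A, concat_eq A y] with ω a ⟨k, hk⟩ b c
      rw [b k hk, a k ⟨c, hk⟩]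

lemma cbot_mem [IsProbabilityMeasure P] {X : Set (Ω → E)} (hX : Stable P X)
    {𝒳 : Set (CondRaw Ω E)} (h : IsStableSigma P X 𝒳) : cbot X ∈ 𝒳 := by
  have h1 := h.2.2.1 _ h.2.1
  have h2 := rep_ccompl hX (isCond_ctop hX) (rep_ctop (P := P))
  rw [compl_univ] at h2
  exact h.1.2.2.1 _ h1 _ (isCond_cbot hX) (rep_unique h2.1 (isCond_cbot hX) h2.2 rep_cbot)

lemma mu_rep_empty [IsProbabilityMeasure P] {X : Set (Ω → E)} (hX : Stable P X)
    {𝒳 : Set (CondRaw Ω E)} (h : IsStableSigma P X 𝒳) {μ : CondRaw Ω E → Ω → ℝ≥0∞}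
    (hμ : IsStableMeasureOn P X 𝒳 μ) : μ (cbot X) =ᵐ[P] 0 := by
  have := hμ.2.1 _ (cbot_mem hX h)
  filter_upwards [this] with ω hω
  rw [hω]; simp [cbot]

/-- The two-piece partition. -/
def part2 (P : @Measure Ω mΩ) (A : Set Ω) (hA : MeasurableSet A) : Partition mΩ P where
  part := fun k => if k = 0 then A else if k = 1 then Aᶜ else ∅
  meas := by intro k; split_ifs <;> simp [hA]
  disj := by
    intro i j hij
    split_ifs <;> simp_all
  cover := by
    have : (⋃ k : ℕ, if k = 0 then A else if k = 1 then Aᶜ else (∅ : Set Ω)) = univ := by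
      rw [eq_univ_iff_forall]
      intro ω
      by_cases h : ω ∈ A
      · exact mem_iUnion.2 ⟨0, by simpa using h⟩
      · exact mem_iUnion.2 ⟨1, by simpa using h⟩
    rw [this]; simp

/-- Restriction `S|A`. -/
def restr (P : @Measure Ω mΩ) (X : Set (Ω → E)) (S : CondRaw Ω E) (A : Set Ω)
    (hA : MeasurableSet A) : CondRaw Ω E :=
  condConcat P (part2 P A hA) (fun k => if k = 0 then S else cbot X)

lemma restr_mem [IsProbabilityMeasure P] {X : Set (Ω → E)} (hX : Stable P X)
    {𝒳 : Set (CondRaw Ω E)} (h : IsStableSigma P X 𝒳) {S} (hS : S ∈ 𝒳) (A : Set Ω)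
    (hA : MeasurableSet A) : restr P X S A hA ∈ 𝒳 := by
  apply h.1.2.2.2
  intro k
  have := cbot_mem hX h
  split_ifs <;> assumption

lemma rep_restr {X : Set (Ω → E)} {S : CondRaw Ω E} {G} (hG : Rep P X G S) (A : Set Ω)
    (hA : MeasurableSet A) : Rep P X (G ∩ Prod.snd ⁻¹' A) (restr P X S A hA) := by
  have h := rep_condConcat (X := X) (part2 P A hA) (G := fun k => if k = 0 then G else ∅)
    (S := fun k => if k = 0 then S else cbot X) (by
      intro k; split_ifs
      · exact hG
      · exact rep_cbot)
  unfold restr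
  convert h using 1
  ext p
  simp only [mem_inter_iff, mem_iUnion]
  constructor
  · intro h; exact ⟨0, by simpa [part2] using h⟩
  · rintro ⟨k, hk⟩
    by_cases h0 : k = 0
    · subst h0; simpa [part2] using hk
    · simp [h0] at hk

lemma mu_restr [IsProbabilityMeasure P] {X : Set (Ω → E)} (hX : Stable P X)
    {𝒳 : Set (CondRaw Ω E)} (h : IsStableSigma P X 𝒳) {μ : CondRaw Ω E → Ω → ℝ≥0∞}
    (hμ : IsStableMeasureOn P X 𝒳 μ) {S} (hS : S ∈ 𝒳) (A : Set Ω) (hA : MeasurableSet A) :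
    μ (restr P X S A hA) =ᵐ[P] A.indicator (μ S) := by
  have h1 := hμ.1.2.2 (part2 P A hA) (fun k => if k = 0 then S else cbot X) (by
    intro k
    have := cbot_mem hX h
    split_ifs <;> assumption)
  filter_upwards [h1, concat_eq (part2 P A hA) (fun k => μ (if k = 0 then S else cbot X)),
    mu_rep_empty hX h hμ] with ω a b c
  unfold restr
  rw [a]
  by_cases hω : ω ∈ A
  · rw [b 0 (by simpa [part2] using hω)]; simp [hω]
  · rw [b 1 (by simpa [part2] using hω)]; simp [hω, c]

/-- The measure on the total space. -/
lemma exists_measure [IsProbabilityMeasure P] {X : Set (Ω → E)} (hX : Stable P X)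
    {𝒳 : Set (CondRaw Ω E)} (h : IsStableSigma P X 𝒳) {μ : CondRaw Ω E → Ω → ℝ≥0∞}
    (hμ : IsStableMeasureOn P X 𝒳 μ) (m : MeasurableSpace ((Ω → E) × Ω))
    (hm : ∀ G, MeasurableSet[m] G → ∃ S ∈ 𝒳, Rep P X G S) :
    ∃ M : @Measure ((Ω → E) × Ω) m, ∀ G, MeasurableSet[m] G → ∀ S ∈ 𝒳, Rep P X G S →
      M G = ∫⁻ ω, μ S ω ∂P := by
  choose! R hR1 hR2 using hm
  have hc := h.1.2.1
  have huniq : ∀ G, ∀ S ∈ 𝒳, ∀ T ∈ 𝒳, Rep P X G S → Rep P X G T →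
      ∫⁻ ω, μ S ω ∂P = ∫⁻ ω, μ T ω ∂P := fun G S hS T hT h1 h2 =>
    lintegral_congr_ae (hμ.1.2.1 S hS T hT (rep_unique (hc S hS) (hc T hT) h1 h2))
  let M : @Measure ((Ω → E) × Ω) m := Measure.ofMeasurable
    (fun G _ => ∫⁻ ω, μ (R G) ω ∂P) (by
      rw [huniq ∅ _ (hR1 _ MeasurableSet.empty) _ (cbot_mem hX h) (hR2 _ MeasurableSet.empty)
        rep_cbot, lintegral_congr_ae (mu_rep_empty hX h hμ)]
      simp) (by
      intro G hG hd
      have hU := rep_cSupFam hX (fun k => hc _ (hR1 _ (hG k))) (fun k => hR2 _ (hG k))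
      have hUm := h.2.2.2 _ (fun k => hR1 _ (hG k))
      rw [huniq _ _ (hR1 _ (MeasurableSet.iUnion hG)) _ hUm (hR2 _ (MeasurableSet.iUnion hG)) hU.2]
      rw [lintegral_congr_ae (hμ.2.2 _ (fun k => hR1 _ (hG k)) ?_ hUm)]
      · exact lintegral_tsum fun k => (hμ.1.1 _ (hR1 _ (hG k))).aemeasurable
      · intro i j hij
        rw [cdisjoint_iff hX (hc _ (hR1 _ (hG i))) (hc _ (hR1 _ (hG j))) (hR2 _ (hG i))
          (hR2 _ (hG j))]
        exact fun x hx => Eventually.of_forall fun ω h1 h2 =>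
          Set.disjoint_left.1 (hd hij) h1 h2)
  refine ⟨M, fun G hG S hS hGS => ?_⟩
  rw [Measure.ofMeasurable_apply G hG]
  exact huniq G _ (hR1 G hG) S hS (hR2 G hG) hGS

end Helpers

end CondMT

namespace CondMT

/-- **Proposition 3.12 (uniqueness of the extension).**  Two stable measures on a
stable measurable space `(X, 𝒳)` which agree on a generating stable collection `ℰ`
closed under finite conditional intersections, and which agree and are finite on
some sequence in `ℰ` whose conditional union is `X`, are equal. -/
theorem stable_measure_uniqueness
    {Ω E : Type*} {mΩ : MeasurableSpace Ω} (P : @Measure Ω mΩ)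
    [IsProbabilityMeasure P] (X : Set (Ω → E)) (hX : Stable P X)
    (𝒳 : Set (CondRaw Ω E)) (hsig : IsStableSigma P X 𝒳)
    (ℰ : Set (CondRaw Ω E)) (hℰ : IsStableColl P X ℰ)
    (hgen : sigmaGen P X ℰ = 𝒳)
    (hπ : ∀ S ∈ ℰ, ∀ T ∈ ℰ, cInf₂ P X S T ∈ ℰ)
    (μ ν : CondRaw Ω E → Ω → ℝ≥0∞)
    (hμ : IsStableMeasureOn P X 𝒳 μ) (hν : IsStableMeasureOn P X 𝒳 ν)
    (hagree : ∀ S ∈ ℰ, μ S =ᵐ[P] ν S)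
    (Z : ℕ → CondRaw Ω E) (hZ : ∀ k, Z k ∈ ℰ)
    (hZsup : ceq P (cSupFam P X Z) (ctop X))
    (hZeq : ∀ k, μ (Z k) =ᵐ[P] ν (Z k))
    (hZfin : ∀ k, ∀ᵐ ω ∂P, μ (Z k) ω < ∞) :
    ∀ S ∈ 𝒳, μ S =ᵐ[P] ν S := by
  classical
  have hc := hsig.1.2.1
  have hℰ𝒳 : ℰ ⊆ 𝒳 := by
    rw [← hgen]
    exact fun S hS 𝒴 h𝒴 => h𝒴.2 hS
  let C : Set (Set ((Ω → E) × Ω)) :=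
    {G | ∃ S ∈ ℰ, ∃ H, Rep P X H S ∧ ∃ A, MeasurableSet A ∧ G = H ∩ Prod.snd ⁻¹' A}
  let m : MeasurableSpace ((Ω → E) × Ω) := MeasurableSpace.generateFrom C
  have hm : ∀ G, MeasurableSet[m] G → ∃ S ∈ 𝒳, Rep P X G S := by
    intro G hG
    induction G, hG using MeasurableSpace.generateFrom_induction with
    | hC G hG _ =>
      obtain ⟨S, hS, H, hH, A, hA, rfl⟩ := hG
      exact ⟨_, restr_mem hX hsig (hℰ𝒳 hS) A hA, rep_restr hH A hA⟩
    | empty => exact ⟨_, cbot_mem hX hsig, rep_cbot⟩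
    | compl G _ ih =>
      obtain ⟨S, hS, hGS⟩ := ih
      exact ⟨_, hsig.2.2.1 S hS, (rep_ccompl hX (hc S hS) hGS).2⟩
    | iUnion G _ ih =>
      choose S hS hGS using ih
      exact ⟨_, hsig.2.2.2 S hS, (rep_cSupFam hX (fun k => hc _ (hS k)) hGS).2⟩
  obtain ⟨Mμ, hMμ⟩ := exists_measure hX hsig hμ m hm
  obtain ⟨Mν, hMν⟩ := exists_measure hX hsig hν m hm
  -- the covering sequence
  choose H hH using fun k => exists_rep (hc _ (hℰ𝒳 (hZ k)))
  have hHcov : ∀ x ∈ X, ∀ᵐ ω ∂P, (x, ω) ∈ ⋃ k, H k := by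
    have h1 := rep_cSupFam hX (fun k => hc _ (hℰ𝒳 (hZ k))) hH
    have h2 := (cle_iff (isCond_ctop hX) rep_ctop h1.2).1 hZsup.2
    intro x hx
    filter_upwards [h2 x hx] with ω h using h trivial
  let N : Set ((Ω → E) × Ω) := (⋃ k, H k)ᶜ
  have hH' : ∀ k, Rep P X (H k ∪ N) (Z k) := by
    intro k
    refine rep_congr (hH k) fun x hx => ?_
    filter_upwards [hHcov x hx] with ω h
    constructor
    · exact fun h => Or.inl h
    · rintro (h' | h')
      · exact h'
      · exact absurd h h'
  let A : ℕ → ℕ → Set Ω := fun k n => {ω | μ (Z k) ω ≤ n ∨ μ (Z k) ω = ∞}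
  have hA : ∀ k n, MeasurableSet (A k n) := by
    intro k n
    have := hμ.1.1 _ (hℰ𝒳 (hZ k))
    exact (measurableSet_le this measurable_const).union
      (this (measurableSet_singleton ∞))
  let B : ℕ → Set ((Ω → E) × Ω) := fun i =>
    (H i.unpair.1 ∪ N) ∩ Prod.snd ⁻¹' (A i.unpair.1 i.unpair.2)
  have hBC : ∀ i, B i ∈ C := fun i => ⟨_, hZ _, _, hH' _, _, hA _ _, rfl⟩
  have hBm : ∀ i, MeasurableSet[m] (B i) := fun i =>
    MeasurableSpace.measurableSet_generateFrom (hBC i)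
  have hexA : ∀ k ω, ∃ n, ω ∈ A k n := by
    intro k ω
    by_cases h : μ (Z k) ω = ∞
    · exact ⟨0, Or.inr h⟩
    · obtain ⟨n, hn⟩ := ENNReal.exists_nat_gt h
      exact ⟨n, Or.inl hn.le⟩
  have hBcov : ⋃ i, B i = univ := by
    rw [eq_univ_iff_forall]
    rintro ⟨x, ω⟩
    have : ∃ k, (x, ω) ∈ H k ∪ N := by
      by_cases h : (x, ω) ∈ ⋃ k, H k
      · obtain ⟨k, hk⟩ := mem_iUnion.1 h
        exact ⟨k, Or.inl hk⟩
      · exact ⟨0, Or.inr h⟩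
    obtain ⟨k, hk⟩ := this
    obtain ⟨n, hn⟩ := hexA k ω
    refine mem_iUnion.2 ⟨Nat.pair k n, ?_⟩
    simp only [B, Nat.unpair_pair]
    exact ⟨hk, hn⟩
  have hpi : IsPiSystem C := by
    rintro _ ⟨S, hS, H1, hH1, A1, hA1, rfl⟩ _ ⟨T, hT, H2, hH2, A2, hA2, rfl⟩ -
    refine ⟨_, hπ S hS T hT, _, (rep_cInf₂ hX (hc _ (hℰ𝒳 hS)) (hc _ (hℰ𝒳 hT)) hH1 hH2).2,
      A1 ∩ A2, hA1.inter hA2, ?_⟩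
    ext p
    simp only [mem_inter_iff, mem_preimage]
    tauto
  have hMeq : Mμ = Mν := by
    refine Measure.ext_of_generateFrom_of_iUnion C B rfl hpi hBcov hBC ?_ ?_
    · intro i
      rw [hMμ _ (hBm i) _ (restr_mem hX hsig (hℰ𝒳 (hZ _)) _ (hA _ _)) (rep_restr (hH' _) _ (hA _ _)),
        lintegral_congr_ae (mu_restr hX hsig hμ (hℰ𝒳 (hZ _)) _ (hA _ _))]
      refine ne_of_lt (lt_of_le_of_lt (lintegral_mono_ae (g := fun _ => (i.unpair.2 : ℝ≥0∞)) ?_) ?_)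
      · filter_upwards [hZfin i.unpair.1] with ω hω
        by_cases h : ω ∈ A i.unpair.1 i.unpair.2
        · rw [indicator_of_mem h]
          rcases h with h | h
          · exact h
          · exact absurd h hω.ne
        · rw [indicator_of_notMem h]; simp
      · simp
    · rintro G hG
      have hGm := MeasurableSpace.measurableSet_generateFrom hG
      obtain ⟨S, hS, H1, hH1, A1, hA1, rfl⟩ := hG
      rw [hMμ _ hGm _ (restr_mem hX hsig (hℰ𝒳 hS) _ hA1) (rep_restr hH1 _ hA1),
        hMν _ hGm _ (restr_mem hX hsig (hℰ𝒳 hS) _ hA1) (rep_restr hH1 _ hA1),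
        lintegral_congr_ae (mu_restr hX hsig hμ (hℰ𝒳 hS) _ hA1),
        lintegral_congr_ae (mu_restr hX hsig hν (hℰ𝒳 hS) _ hA1)]
      apply lintegral_congr_ae
      filter_upwards [hagree S hS] with ω h
      by_cases hω : ω ∈ A1 <;> simp [hω, h]
  -- cylinders are measurable
  have hcyl : ∀ D : Set Ω, MeasurableSet D →
      MeasurableSet[m] (Prod.snd ⁻¹' D : Set ((Ω → E) × Ω)) := by
    intro D hD
    have : (Prod.snd ⁻¹' D : Set ((Ω → E) × Ω)) = ⋃ k, (H k ∪ N) ∩ Prod.snd ⁻¹' D := by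
      rw [← iUnion_inter]
      ext p
      constructor
      · intro h
        refine ⟨?_, h⟩
        by_cases h : p ∈ ⋃ k, H k
        · obtain ⟨k, hk⟩ := mem_iUnion.1 h
          exact mem_iUnion.2 ⟨k, Or.inl hk⟩
        · exact mem_iUnion.2 ⟨0, Or.inr h⟩
      · exact fun h => h.2
    rw [this]
    exact MeasurableSet.iUnion fun k =>
      MeasurableSpace.measurableSet_generateFrom ⟨_, hZ k, _, hH' k, D, hD, rfl⟩
  -- every element of the sigma-algebra has a representative
  have hrep : ∀ S ∈ 𝒳, ∃ G, MeasurableSet[m] G ∧ Rep P X G S := by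
    have hsub : 𝒳 ⊆ {S | S ∈ 𝒳 ∧ ∃ G, MeasurableSet[m] G ∧ Rep P X G S} := by
      nth_rw 1 [← hgen]
      apply sInter_subset_of_mem
      have hEsub : ℰ ⊆ {S | S ∈ 𝒳 ∧ ∃ G, MeasurableSet[m] G ∧ Rep P X G S} := by
        intro S hS
        refine ⟨hℰ𝒳 hS, ?_⟩
        obtain ⟨G, hG⟩ := exists_rep (hc S (hℰ𝒳 hS))
        exact ⟨G, MeasurableSpace.measurableSet_generateFrom
          ⟨S, hS, G, hG, univ, MeasurableSet.univ, by simp⟩, hG⟩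
      refine ⟨⟨⟨hℰ.1.mono hEsub, fun S hS => hc S hS.1, ?_, ?_⟩, ?_, ?_, ?_⟩, hEsub⟩
      · rintro S ⟨hS, G, hG, hGS⟩ T hT hST
        exact ⟨hsig.1.2.2.1 S hS T hT hST, G, hG, rep_ceq (hc S hS) hT hGS hST⟩
      · intro Q S hS
        choose hS G hG hGS using hS
        exact ⟨hsig.1.2.2.2 Q S hS, _, MeasurableSet.iUnion fun k =>
          (hG k).inter (hcyl _ (Q.meas k)), rep_condConcat Q hGS⟩
      · exact ⟨hsig.2.1, univ, MeasurableSet.univ, rep_ctop⟩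
      · rintro S ⟨hS, G, hG, hGS⟩
        exact ⟨hsig.2.2.1 S hS, _, hG.compl, (rep_ccompl hX (hc S hS) hGS).2⟩
      · intro S hS
        choose hS G hG hGS using hS
        exact ⟨hsig.2.2.2 S hS, _, MeasurableSet.iUnion hG,
          (rep_cSupFam hX (fun k => hc _ (hS k)) hGS).2⟩
    exact fun S hS => (hsub hS).2
  intro S hS
  obtain ⟨G, hG, hGS⟩ := hrep S hS
  refine ae_eq_of_forall_setLIntegral_eq_of_sigmaFinite (hμ.1.1 S hS) (hν.1.1 S hS) ?_
  intro D hD _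
  have h1 := hMμ _ (hG.inter (hcyl D hD)) _ (restr_mem hX hsig hS D hD) (rep_restr hGS D hD)
  have h2 := hMν _ (hG.inter (hcyl D hD)) _ (restr_mem hX hsig hS D hD) (rep_restr hGS D hD)
  rw [lintegral_congr_ae (mu_restr hX hsig hμ hS D hD), lintegral_indicator hD] at h1
  rw [lintegral_congr_ae (mu_restr hX hsig hν hS D hD), lintegral_indicator hD] at h2
  rw [← h1, ← h2, hMeq]

end CondMT
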